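/- arXiv:0907.0684 — 3 statements merged into one kernel-verified Lean document; each statement's English description precedes it below -/
import Mathlib

section
/- There are exactly four pairs (X₁, X₂) of positive real numbers satisfying the Einstein system with parameters γ₁ = 5/9, γ₂ = 1/9, b₁ = 1/36, b₂ = 5/36, r = 1/2. (This is the algebraic content of the theorem: the bisymmetric fibration of Type II corresponding to the triple (𝔢₇, 𝔰𝔬₁₂ ⊕ 𝔰𝔲₂, 𝔰𝔬₂ ⊕ 𝔰𝔬₁₀ ⊕ ℝ) admits, up to homothety, exactly four Einstein adapted metrics.) -/
/-- The Einstein system (E1)–(E2) for a Type II bisymmetric fibration,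
in unknowns `X₁ X₂` with parameters `γ₁ γ₂ b₁ b₂ r`. -/
def EinsteinSystem (γ₁ γ₂ b₁ b₂ r X₁ X₂ : ℝ) : Prop :=
  2*γ₁*X₁^2*X₂ + (1-γ₁)*X₂ - 2*γ₂*X₁*X₂^2 - (1-γ₂)*X₁ = 0 ∧
  2*b₁*X₂ + 2*b₂*X₁ - 4*r*X₁*X₂ + 2*γ₁*X₁^2*X₂ + (1-γ₁)*X₂ = 0

/-!
Equation (E2) is linear in `X₂`: it reads `L(X₁) X₂ = -2 b₂ X₁` with `L` a quadratic polynomial.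
Substituting this in `L² · (E1)` gives `-X₁ Q(X₁)`, where `Q` is a quartic combining `L²`, `L` and
`X₁²` with nonnegative coefficients, the last one positive (if `γ₁ ∈ [0, 1]`, `γ₂ ∈ (0, 1]` and
`b₂ > 0`). Hence `L` is negative at every nonzero root of `Q`, so a positive root `X₁` always comes
with a positive `X₂`, and the solutions are counted by the positive roots of `Q`. For the given
parameters `Q` changes sign four times on `(0, ∞)`.
-/

open Polynomial Set

theorem exists_strictMono_zeros_of_mul_neg {α δ : Type*} [ConditionallyCompleteLinearOrder α]
    [TopologicalSpace α] [OrderTopology α] [DenselyOrdered α] [Ring δ] [LinearOrder δ]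
    [IsStrictOrderedRing δ] [TopologicalSpace δ] [OrderClosedTopology δ] {n : ℕ} {f : α → δ}
    {t : Fin (n + 1) → α} (ht : Monotone t) (hf : ContinuousOn f (Icc (t 0) (t (Fin.last n))))
    (hsign : ∀ i : Fin n, f (t i.castSucc) * f (t i.succ) < 0) :
    ∃ x : Fin n → α, StrictMono x ∧ ∀ i, x i ∈ Ioo (t i.castSucc) (t i.succ) ∧ f (x i) = 0 := by
  have hzero (i : Fin n) : ∃ x ∈ Ioo (t i.castSucc) (t i.succ), f x = 0 := by
    have hle : t i.castSucc ≤ t i.succ := ht i.castSucc_le_succ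
    have hfi : ContinuousOn f (Icc (t i.castSucc) (t i.succ)) :=
      hf.mono (Icc_subset_Icc (ht (Fin.zero_le _)) (ht (Fin.le_last _)))
    rcases mul_neg_iff.mp (hsign i) with ⟨hpos, hneg⟩ | ⟨hneg, hpos⟩
    · exact intermediate_value_Ioo' hle hfi ⟨hneg, hpos⟩
    · exact intermediate_value_Ioo hle hfi ⟨hneg, hpos⟩
  choose x hx hfx using hzero
  refine ⟨x, fun i j hij => ?_, fun i => ⟨hx i, hfx i⟩⟩
  calc x i < t i.succ := (hx i).2
    _ ≤ t j.castSucc := ht (Fin.succ_le_castSucc_iff.mpr hij)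
    _ < x j := (hx j).1

theorem ncard_isRoot_eq_of_mul_neg {p : ℝ[X]} {n : ℕ} (hp : p ≠ 0) (hdeg : p.natDegree ≤ n)
    {t : Fin (n + 1) → ℝ} (ht : Monotone t)
    (hsign : ∀ i : Fin n, p.eval (t i.castSucc) * p.eval (t i.succ) < 0)
    {s : Set ℝ} (hs : Ioo (t 0) (t (Fin.last n)) ⊆ s) :
    {x | x ∈ s ∧ p.IsRoot x}.ncard = n := by
  obtain ⟨x, hmono, hx⟩ := exists_strictMono_zeros_of_mul_neg ht p.continuousOn hsign
  have hcard : (Finset.univ.image x).card = n := by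
    rw [Finset.card_image_of_injective _ hmono.injective, Finset.card_fin]
  have hroots : p.roots = (Finset.univ.image x).val :=
    roots_eq_of_natDegree_le_card_of_ne_zero (by simp [hx]) (hdeg.trans_eq hcard.symm) hp
  have hmem (i : Fin n) : x i ∈ s :=
    hs ⟨(ht (Fin.zero_le _)).trans_lt (hx i).1.1, (hx i).1.2.trans_le (ht (Fin.le_last _))⟩
  have hset : {x | x ∈ s ∧ p.IsRoot x} = (Finset.univ.image x : Finset ℝ) := by
    ext y
    rw [mem_ofPred_eq, ← mem_roots hp, hroots, Finset.mem_val, Finset.mem_coe,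
      and_iff_right_iff_imp]
    simp only [Finset.mem_image, Finset.mem_univ, true_and]
    rintro ⟨i, rfl⟩
    exact hmem i
  rw [hset, ncard_coe_finset, hcard]

namespace EinsteinSystem

/-- The coefficient of `X₂` in (E2), as a polynomial in `X₁`. -/
noncomputable def sndCoeff (γ₁ b₁ r : ℝ) : ℝ[X] :=
  C (2 * γ₁) * X ^ 2 - C (4 * r) * X + C (2 * b₁ + 1 - γ₁)

/-- The polynomial in `X₁` left after eliminating `X₂` from the Einstein system, without the
factor `X₁` that the elimination produces. -/
noncomputable def eliminant (γ₁ γ₂ b₁ b₂ r : ℝ) : ℝ[X] :=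
  C (1 - γ₂) * sndCoeff γ₁ b₁ r ^ 2
    + C (2 * b₂) * (C (2 * γ₁) * X ^ 2 + C (1 - γ₁)) * sndCoeff γ₁ b₁ r
    + C (8 * γ₂ * b₂ ^ 2) * X ^ 2

variable {γ₁ γ₂ b₁ b₂ r x y : ℝ}

theorem eval_sndCoeff :
    (sndCoeff γ₁ b₁ r).eval x = 2 * γ₁ * x ^ 2 - 4 * r * x + (2 * b₁ + 1 - γ₁) := by
  simp [sndCoeff]

theorem eval_eliminant :
    (eliminant γ₁ γ₂ b₁ b₂ r).eval x =
      (1 - γ₂) * (sndCoeff γ₁ b₁ r).eval x ^ 2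
        + 2 * b₂ * (2 * γ₁ * x ^ 2 + (1 - γ₁)) * (sndCoeff γ₁ b₁ r).eval x
        + 8 * γ₂ * b₂ ^ 2 * x ^ 2 := by
  simp [eliminant]

theorem natDegree_eliminant_le : (eliminant γ₁ γ₂ b₁ b₂ r).natDegree ≤ 4 := by
  unfold eliminant sndCoeff
  compute_degree

theorem snd_mul_eval_sndCoeff (h : EinsteinSystem γ₁ γ₂ b₁ b₂ r x y) :
    y * (sndCoeff γ₁ b₁ r).eval x = -2 * b₂ * x := by
  rw [eval_sndCoeff]
  linear_combination h.2

theorem eval_sndCoeff_ne_zero (hb₂ : b₂ ≠ 0) (hx : x ≠ 0)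
    (h : EinsteinSystem γ₁ γ₂ b₁ b₂ r x y) : (sndCoeff γ₁ b₁ r).eval x ≠ 0 := by
  refine right_ne_zero_of_mul (a := y) ?_
  rw [h.snd_mul_eval_sndCoeff]
  simp [hb₂, hx]

theorem iff_isRoot_eliminant (hx : x ≠ 0) (hL : (sndCoeff γ₁ b₁ r).eval x ≠ 0) :
    EinsteinSystem γ₁ γ₂ b₁ b₂ r x y ↔
      (eliminant γ₁ γ₂ b₁ b₂ r).IsRoot x ∧ y = -2 * b₂ * x / (sndCoeff γ₁ b₁ r).eval x := by
  set L := (sndCoeff γ₁ b₁ r).eval x with hL_def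
  have hE2 : 2 * b₁ * y + 2 * b₂ * x - 4 * r * x * y + 2 * γ₁ * x ^ 2 * y + (1 - γ₁) * y = 0 ↔
      y = -2 * b₂ * x / L := by
    rw [eq_div_iff hL, hL_def, eval_sndCoeff]
    constructor <;> intro h <;> linear_combination h
  have hE1 (hy : y = -2 * b₂ * x / L) :
      (2 * γ₁ * x ^ 2 * y + (1 - γ₁) * y - 2 * γ₂ * x * y ^ 2 - (1 - γ₂) * x) * L ^ 2 =
        -x * (eliminant γ₁ γ₂ b₁ b₂ r).eval x := by
    rw [eval_eliminant, ← hL_def, hy]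
    field_simp
    ring
  rw [EinsteinSystem, hE2, IsRoot.def]
  refine and_congr_left fun hy => ?_
  rw [← mul_eq_zero_iff_right (pow_ne_zero 2 hL), hE1 hy, mul_eq_zero_iff_left (neg_ne_zero.mpr hx)]

theorem eval_sndCoeff_neg (hγ₁ : γ₁ ∈ Icc 0 1) (hγ₂ : γ₂ ∈ Ioc 0 1) (hb₂ : 0 < b₂) (hx : x ≠ 0)
    (hroot : (eliminant γ₁ γ₂ b₁ b₂ r).IsRoot x) : (sndCoeff γ₁ b₁ r).eval x < 0 := by
  by_contra! hL
  have hγ₁' : 0 ≤ 1 - γ₁ := sub_nonneg.mpr hγ₁.2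
  have hγ₂' : 0 ≤ 1 - γ₂ := sub_nonneg.mpr hγ₂.2
  have hγ₁_nonneg := hγ₁.1
  have hγ₂_pos := hγ₂.1
  have hpos : 0 < (eliminant γ₁ γ₂ b₁ b₂ r).eval x := by
    rw [eval_eliminant]
    positivity
  exact hpos.ne' hroot

theorem pos_solution_iff (hγ₁ : γ₁ ∈ Icc 0 1) (hγ₂ : γ₂ ∈ Ioc 0 1) (hb₂ : 0 < b₂) :
    (0 < x ∧ 0 < y ∧ EinsteinSystem γ₁ γ₂ b₁ b₂ r x y) ↔
      (0 < x ∧ (eliminant γ₁ γ₂ b₁ b₂ r).IsRoot x) ∧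
        y = -2 * b₂ * x / (sndCoeff γ₁ b₁ r).eval x := by
  rw [and_assoc, and_congr_right_iff]
  intro hx
  constructor
  · rintro ⟨-, h⟩
    exact (iff_isRoot_eliminant hx.ne' (h.eval_sndCoeff_ne_zero hb₂.ne' hx.ne')).mp h
  · rintro ⟨hroot, hy⟩
    have hL := eval_sndCoeff_neg hγ₁ hγ₂ hb₂ hx.ne' hroot
    have hnum : -2 * b₂ * x < 0 := by linarith [mul_pos hb₂ hx]
    exact ⟨hy ▸ div_pos_of_neg_of_neg hnum hL,
      (iff_isRoot_eliminant hx.ne' hL.ne).mpr ⟨hroot, hy⟩⟩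

theorem bijOn_fst_pos_solutions (hγ₁ : γ₁ ∈ Icc 0 1) (hγ₂ : γ₂ ∈ Ioc 0 1) (hb₂ : 0 < b₂) :
    BijOn Prod.fst {P : ℝ × ℝ | 0 < P.1 ∧ 0 < P.2 ∧ EinsteinSystem γ₁ γ₂ b₁ b₂ r P.1 P.2}
      {x | x ∈ Ioi 0 ∧ (eliminant γ₁ γ₂ b₁ b₂ r).IsRoot x} := by
  simp only [pos_solution_iff hγ₁ hγ₂ hb₂]
  refine ⟨fun P hP => hP.1, ?_, fun x hx => ?_⟩
  · rintro ⟨x, y⟩ ⟨-, hy⟩ ⟨_, z⟩ ⟨-, hz⟩ rfl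
    exact Prod.ext rfl (hy.trans hz.symm)
  · exact ⟨(x, -2 * b₂ * x / (sndCoeff γ₁ b₁ r).eval x), ⟨hx, rfl⟩, rfl⟩

end EinsteinSystem

/- STATEMENT 5: exactly four positive solutions for (𝔢₇, 𝔰𝔬₁₂⊕𝔰𝔲₂, 𝔰𝔬₂⊕𝔰𝔬₁₀⊕ℝ). -/
theorem e7_p2_exactly_four_einstein_adapted_metrics :
    {P : ℝ × ℝ | 0 < P.1 ∧ 0 < P.2 ∧
      EinsteinSystem (5/9) (1/9) (1/36) (5/36) (1/2) P.1 P.2}.ncard = 4 := by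
  let p := EinsteinSystem.eliminant (5/9) (1/9) (1/36) (5/36) (1/2)
  let t : Fin 5 → ℝ := ![3/10, 2/5, 1/2, 1, 3/2]
  have ht : Monotone t := by
    refine Fin.monotone_iff_le_succ.mpr fun i => ?_
    fin_cases i <;> norm_num [t, Fin.succ]
  have hsign (i : Fin 4) : p.eval (t i.castSucc) * p.eval (t i.succ) < 0 := by
    fin_cases i <;> norm_num [p, t, Fin.succ, EinsteinSystem.eval_eliminant,
      EinsteinSystem.eval_sndCoeff]
  have hp : p ≠ 0 := fun h => by simpa [h] using hsign 0
  have hpos : Ioo (t 0) (t (Fin.last 4)) ⊆ Ioi 0 :=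
    fun x hx => (show (0 : ℝ) < t 0 by norm_num [t]).trans hx.1
  rw [(EinsteinSystem.bijOn_fst_pos_solutions
    (by norm_num) (by norm_num) (by norm_num)).ncard_eq]
  exact ncard_isRoot_eq_of_mul_neg hp EinsteinSystem.natDegree_eliminant_le ht hsign hpos
end

section
/- There are exactly two pairs (X₁, X₂) of positive real numbers satisfying the Einstein system with parameters γ₁ = 5/9, γ₂ = 1/9, b₁ = 1/36, b₂ = 2/9, r = 1/2. (This is the algebraic content of the theorem: the bisymmetric fibration of Type II corresponding to the triple (𝔢₇, 𝔰𝔬₁₂ ⊕ 𝔰𝔲₂, 𝔰𝔬₄ ⊕ 𝔰𝔬₈ ⊕ ℝ) admits, up to homothety, exactly two Einstein adapted metrics.) -/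
/-!
Equation (E2) is linear in `X₂`: it reads `X₂ * q(X₁) = -2 * b₂ * X₁` for a quadratic `q`. When
`b₂ > 0`, positive solutions therefore have `q(X₁) < 0`, and eliminating `X₂` from (E1) leaves a
quartic equation in `X₁` alone. For the `𝔢₇` parameters the derivative of this quartic has the
rational roots `1/2`, `11/20` and `6/5`, and the quartic is negative at the local maximum `11/20`.
So it has exactly two real roots, one on either side of `[1/2, 6/5]`. As it is positive at the
zeros `3/10` and `3/2` of `q`, both roots lie between them, where `q < 0`.
-/

open Set

section TwoPreimages

variable {α δ : Type*} [ConditionallyCompleteLinearOrder α] [TopologicalSpace α] [OrderTopology α]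
  [DenselyOrdered α] [LinearOrder δ] [TopologicalSpace δ] [OrderClosedTopology δ]

theorem exists_preimage_singleton_eq_pair_of_strictAntiOn_of_strictMonoOn {f : α → δ}
    {a b c d : α} {y : δ} (hf : Continuous f) (hab : a ≤ b) (hbc : b ≤ c) (hcd : c ≤ d)
    (hanti : StrictAntiOn f (Iic b)) (hlt : ∀ x ∈ Icc b c, f x < y)
    (hmono : StrictMonoOn f (Ici c)) (ha : y < f a) (hd : y < f d) :
    ∃ u ∈ Ioo a b, ∃ v ∈ Ioo c d, f ⁻¹' {y} = {u, v} := by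
  obtain ⟨u, hu, hfu⟩ :=
    intermediate_value_Ioo' hab hf.continuousOn ⟨hlt b (left_mem_Icc.2 hbc), ha⟩
  obtain ⟨v, hv, hfv⟩ :=
    intermediate_value_Ioo hcd hf.continuousOn ⟨hlt c (right_mem_Icc.2 hbc), hd⟩
  refine ⟨u, hu, v, hv, Subset.antisymm (fun x hx => ?_) (pair_subset hfu hfv)⟩
  rcases le_total x b with hxb | hbx
  · exact .inl (hanti.injOn hxb hu.2.le (hx.trans hfu.symm))
  rcases le_total c x with hcx | hxc
  · exact .inr (hmono.injOn hcx hv.1.le (hx.trans hfv.symm))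
  · exact absurd hx (hlt x ⟨hbx, hxc⟩).ne

end TwoPreimages

section Elimination

/-- The coefficient of `X₂` in (E2), as a function of `x = X₁`: (E2) says that
`X₂ * einsteinQuadratic γ₁ b₁ r X₁ = -2 * b₂ * X₁`. -/
def einsteinQuadratic (γ₁ b₁ r x : ℝ) : ℝ := 2*γ₁*x^2 - 4*r*x + 2*b₁ + (1-γ₁)

/-- The quartic in `x = X₁` left by eliminating `X₂` from the Einstein system: substitute
`X₂ = -2 * b₂ * X₁ / einsteinQuadratic γ₁ b₁ r X₁` in (E1), clear denominators and divide
by `-X₁`. -/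
def einsteinQuartic (γ₁ γ₂ b₁ b₂ r x : ℝ) : ℝ :=
  (1-γ₂) * einsteinQuadratic γ₁ b₁ r x ^ 2
    + 2*b₂*(2*γ₁*x^2 + (1-γ₁)) * einsteinQuadratic γ₁ b₁ r x + 8*γ₂*b₂^2*x^2

variable {γ₁ γ₂ b₁ b₂ r x y : ℝ}

theorem EinsteinSystem.mul_einsteinQuadratic (h : EinsteinSystem γ₁ γ₂ b₁ b₂ r x y) :
    y * einsteinQuadratic γ₁ b₁ r x = -2*b₂*x := by
  unfold einsteinQuadratic
  linear_combination h.2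

theorem einsteinSystem_iff_of_ne_zero (hx : x ≠ 0) (hq : einsteinQuadratic γ₁ b₁ r x ≠ 0) :
    EinsteinSystem γ₁ γ₂ b₁ b₂ r x y ↔
      einsteinQuartic γ₁ γ₂ b₁ b₂ r x = 0 ∧ y = -2*b₂*x / einsteinQuadratic γ₁ b₁ r x := by
  have clear_denominators (hy : y * einsteinQuadratic γ₁ b₁ r x = -2*b₂*x) :
      (2*γ₁*x^2*y + (1-γ₁)*y - 2*γ₂*x*y^2 - (1-γ₂)*x) * einsteinQuadratic γ₁ b₁ r x ^ 2
        = -x * einsteinQuartic γ₁ γ₂ b₁ b₂ r x := by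
    unfold einsteinQuartic
    linear_combination ((2*γ₁*x^2 + (1-γ₁)) * einsteinQuadratic γ₁ b₁ r x
      - 2*γ₂*x*(y * einsteinQuadratic γ₁ b₁ r x - 2*b₂*x)) * hy
  rw [eq_div_iff hq]
  constructor
  · intro h
    have hy := h.mul_einsteinQuadratic
    have hquartic := clear_denominators hy
    rw [h.1, zero_mul, zero_eq_mul] at hquartic
    exact ⟨hquartic.resolve_left (neg_ne_zero.2 hx), hy⟩
  · rintro ⟨hquartic, hy⟩
    have hE1 := clear_denominators hy
    rw [hquartic, mul_zero] at hE1
    refine ⟨(mul_eq_zero.1 hE1).resolve_right (pow_ne_zero 2 hq), ?_⟩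
    unfold einsteinQuadratic at hy
    linear_combination hy

theorem pos_einsteinSystem_iff (hb₂ : 0 < b₂) :
    0 < x ∧ 0 < y ∧ EinsteinSystem γ₁ γ₂ b₁ b₂ r x y ↔
      (0 < x ∧ einsteinQuadratic γ₁ b₁ r x < 0 ∧ einsteinQuartic γ₁ γ₂ b₁ b₂ r x = 0) ∧
        y = -2*b₂*x / einsteinQuadratic γ₁ b₁ r x := by
  constructor
  · rintro ⟨hx, hy, h⟩
    have hneg : y * einsteinQuadratic γ₁ b₁ r x < 0 := by
      rw [h.mul_einsteinQuadratic]
      linarith [mul_pos hb₂ hx]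
    have hq : einsteinQuadratic γ₁ b₁ r x < 0 := (pos_iff_neg_of_mul_neg hneg).1 hy
    obtain ⟨hquartic, hy_eq⟩ := (einsteinSystem_iff_of_ne_zero hx.ne' hq.ne).1 h
    exact ⟨⟨hx, hq, hquartic⟩, hy_eq⟩
  · rintro ⟨⟨hx, hq, hquartic⟩, hy⟩
    refine ⟨hx, ?_, (einsteinSystem_iff_of_ne_zero hx.ne' hq.ne).2 ⟨hquartic, hy⟩⟩
    rw [hy]
    exact div_pos_of_neg_of_neg (by linarith [mul_pos hb₂ hx]) hq

theorem ncard_setOf_pos_einsteinSystem (hb₂ : 0 < b₂) :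
    {P : ℝ × ℝ | 0 < P.1 ∧ 0 < P.2 ∧ EinsteinSystem γ₁ γ₂ b₁ b₂ r P.1 P.2}.ncard =
      {x | 0 < x ∧ einsteinQuadratic γ₁ b₁ r x < 0 ∧
        einsteinQuartic γ₁ γ₂ b₁ b₂ r x = 0}.ncard := by
  let solution (x : ℝ) : ℝ × ℝ := (x, -2*b₂*x / einsteinQuadratic γ₁ b₁ r x)
  have solution_injective : Function.Injective solution := fun _ _ h => congrArg Prod.fst h
  rw [← ncard_image_of_injective _ solution_injective]
  congr 1
  ext ⟨x, y⟩
  simp only [mem_ofPred_eq, pos_einsteinSystem_iff hb₂, mem_image, solution, Prod.mk.injEq]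
  constructor
  · rintro ⟨hx, rfl⟩
    exact ⟨x, hx, rfl, rfl⟩
  · rintro ⟨_, hx, rfl, rfl⟩
    exact ⟨hx, rfl⟩

end Elimination

section E7

/-- The multiple by `243/2` of `einsteinQuartic` at the parameters of the triple
`(𝔢₇, 𝔰𝔬₁₂ ⊕ 𝔰𝔲₂, 𝔰𝔬₄ ⊕ 𝔰𝔬₈ ⊕ ℝ)`, scaled so as to have coprime integer coefficients. -/
def e7Quartic (x : ℝ) : ℝ := 200*x^4 - 600*x^3 + 614*x^2 - 264*x + 39

theorem einsteinQuartic_e7 (x : ℝ) :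
    einsteinQuartic (5/9) (1/9) (1/36) (2/9) (1/2) x = 2/243 * e7Quartic x := by
  unfold einsteinQuartic einsteinQuadratic e7Quartic
  ring

theorem einsteinQuadratic_e7_neg_iff {x : ℝ} :
    einsteinQuadratic (5/9) (1/36) (1/2) x < 0 ↔ x ∈ Ioo (3/10) (3/2) := by
  have hfactor : einsteinQuadratic (5/9) (1/36) (1/2) x = 10/9 * ((x - 3/10) * (x - 3/2)) := by
    unfold einsteinQuadratic
    ring
  rw [hfactor, mem_Ioo]
  constructor
  · intro h
    constructor <;> nlinarith
  · rintro ⟨hl, hu⟩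
    linarith [mul_neg_of_pos_of_neg (sub_pos.2 hl) (sub_neg.2 hu)]

theorem hasDerivAt_e7Quartic (x : ℝ) :
    HasDerivAt e7Quartic (4 * (2*x - 1) * (20*x - 11) * (5*x - 6)) x := by
  have h := ((((((hasDerivAt_id x).pow 4).const_mul 200).sub
    (((hasDerivAt_id x).pow 3).const_mul 600)).add
    (((hasDerivAt_id x).pow 2).const_mul 614)).sub ((hasDerivAt_id x).const_mul 264)).add_const 39
  refine h.congr_deriv ?_
  simp only [id_eq]
  ring

theorem continuous_e7Quartic : Continuous e7Quartic :=
  continuous_iff_continuousAt.2 fun x => (hasDerivAt_e7Quartic x).continuousAt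

theorem strictAntiOn_e7Quartic : StrictAntiOn e7Quartic (Iic (1/2)) := by
  refine strictAntiOn_of_deriv_neg (convex_Iic _) continuous_e7Quartic.continuousOn fun x hx => ?_
  rw [interior_Iic, mem_Iio] at hx
  rw [(hasDerivAt_e7Quartic x).deriv]
  have hpos : 0 < 4 * (2*x - 1) * (20*x - 11) :=
    mul_pos_of_neg_of_neg (by linarith) (by linarith)
  exact mul_neg_of_pos_of_neg hpos (by linarith)

theorem strictMonoOn_e7Quartic : StrictMonoOn e7Quartic (Ici (6/5)) := by
  refine strictMonoOn_of_deriv_pos (convex_Ici _) continuous_e7Quartic.continuousOn fun x hx => ?_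
  rw [interior_Ici, mem_Ioi] at hx
  rw [(hasDerivAt_e7Quartic x).deriv]
  have hpos : 0 < 4 * (2*x - 1) * (20*x - 11) := mul_pos (by linarith) (by linarith)
  exact mul_pos hpos (by linarith)

theorem e7Quartic_neg {x : ℝ} (hx : x ∈ Icc (1 / 2) (6 / 5)) : e7Quartic x < 0 := by
  -- Taylor expansion at the local maximum `11/20`.
  have htaylor : e7Quartic x = (x - 11/20)^2 * (200*x^2 - 380*x + 271/2) - 1591/800 := by
    unfold e7Quartic
    ring
  have hfactor : 200*x^2 - 380*x + 271/2 ≤ 0 := by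
    linarith [hx.1, mul_nonneg (sub_nonneg.2 hx.1) (sub_nonneg.2 hx.2)]
  linarith [mul_nonpos_of_nonneg_of_nonpos (sq_nonneg (x - 11/20)) hfactor]

theorem exists_e7Quartic_preimage_zero_eq_pair :
    ∃ u ∈ Ioo (3/10) (1/2), ∃ v ∈ Ioo (6/5) (3/2), e7Quartic ⁻¹' {0} = {u, v} :=
  exists_preimage_singleton_eq_pair_of_strictAntiOn_of_strictMonoOn continuous_e7Quartic
    (by norm_num) (by norm_num) (by norm_num)
    strictAntiOn_e7Quartic (fun _ => e7Quartic_neg) strictMonoOn_e7Quartic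
    (by norm_num [e7Quartic]) (by norm_num [e7Quartic])

theorem setOf_pos_einsteinQuartic_e7 :
    {x | 0 < x ∧ einsteinQuadratic (5/9) (1/36) (1/2) x < 0 ∧
      einsteinQuartic (5/9) (1/9) (1/36) (2/9) (1/2) x = 0} =
      Ioo (3/10) (3/2) ∩ e7Quartic ⁻¹' {0} := by
  ext x
  simp only [einsteinQuadratic_e7_neg_iff, einsteinQuartic_e7, mem_ofPred_eq, mem_inter_iff,
    mem_preimage, mem_singleton_iff, mul_eq_zero_iff_left (by norm_num : (2/243 : ℝ) ≠ 0)]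
  exact ⟨fun h => h.2, fun h => ⟨by linarith [h.1.1], h⟩⟩

end E7

/- STATEMENT 6: exactly two positive solutions for (𝔢₇, 𝔰𝔬₁₂⊕𝔰𝔲₂, 𝔰𝔬₄⊕𝔰𝔬₈⊕ℝ). -/
theorem e7_p4_exactly_two_einstein_adapted_metrics :
    {P : ℝ × ℝ | 0 < P.1 ∧ 0 < P.2 ∧
      EinsteinSystem (5/9) (1/9) (1/36) (2/9) (1/2) P.1 P.2}.ncard = 2 := by
  rw [ncard_setOf_pos_einsteinSystem (by norm_num), setOf_pos_einsteinQuartic_e7]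
  obtain ⟨u, hu, v, hv, hroots⟩ := exists_e7Quartic_preimage_zero_eq_pair
  have huv : u < v := by linarith [hu.2, hv.1]
  have hu_mem : u ∈ Ioo (3/10) (3/2) := ⟨hu.1, huv.trans hv.2⟩
  have hv_mem : v ∈ Ioo (3/10) (3/2) := ⟨hu.1.trans huv, hv.2⟩
  rw [hroots, inter_eq_right.2 (pair_subset hu_mem hv_mem), ncard_pair huv.ne]
end

section
/- Let 0 < γ₁ < 1, set γ₂ = 1 − γ₁, and let b₁, b₂ ≥ 0 and r > 0. Then a pair (X₁, X₂) of positive reals satisfies equation (E1) if and only if (1−γ₁)X₂ = γ₁X₁ or 2X₁X₂ = 1. Consequently, (X₁, X₂) positive satisfies the full Einstein system if and only if either (a) (1−γ₁)X₂ = γ₁X₁ and 2γ₁X₁² − 4rX₁ + (2b₁ + 2b₂(1−γ₁)/γ₁ + 1 − γ₁) = 0, or (b) 2X₁X₂ = 1 and 2(2b₂ + γ₁)X₁² − 4rX₁ + (2b₁ + 1 − γ₁) = 0; in case (b), setting D = 4r² − 2(2b₂+γ₁)(2b₁+1−γ₁), a solution exists only if D ≥ 0 and then X₁ = (2r ± √D)/(2(2b₂+γ₁))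 and X₂ = 1/(2X₁). (This is the algebraic content of the corollary classifying all Einstein adapted metrics in the case γ₂ = 1 − γ₁; in case (b) the restriction to the fiber is not Einstein and the metric is never binormal.) -/
/-!
When `γ₂ = 1 - γ₁`, the left-hand side of (E1) factors as
`((1 - γ₁) X₂ - γ₁ X₁) (1 - 2 X₁ X₂)`, so the solutions of (E1) form a line and a hyperbola.
On either curve the left-hand side of (E2) is `X₂` times a quadratic polynomial in `X₁` alone.
-/

theorem first_einstein_equation_iff {R : Type*} [CommRing R] [NoZeroDivisors R] (γ x y : R) :
    2 * γ * x ^ 2 * y + (1 - γ) * y - 2 * (1 - γ) * x * y ^ 2 - (1 - (1 - γ)) * x = 0 ↔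
      (1 - γ) * y = γ * x ∨ 2 * x * y = 1 := by
  have factorization :
      2 * γ * x ^ 2 * y + (1 - γ) * y - 2 * (1 - γ) * x * y ^ 2 - (1 - (1 - γ)) * x =
      ((1 - γ) * y - γ * x) * (1 - 2 * x * y) := by ring
  rw [factorization, mul_eq_zero, sub_eq_zero, sub_eq_zero, eq_comm (a := (1 : R))]

theorem second_einstein_equation_iff_of_line {K : Type*} [Field K] {γ b₁ b₂ r x y : K}
    (hγ : γ ≠ 0) (hy : y ≠ 0) (line : (1 - γ) * y = γ * x) :
    2 * b₁ * y + 2 * b₂ * x - 4 * r * x * y + 2 * γ * x ^ 2 * y + (1 - γ) * y = 0 ↔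
      2 * γ * x ^ 2 - 4 * r * x + (2 * b₁ + 2 * b₂ * (1 - γ) / γ + 1 - γ) = 0 := by
  have hx : x = (1 - γ) / γ * y := by
    rw [div_mul_eq_mul_div, eq_div_iff hγ, line, mul_comm]
  have factorization : 2 * b₁ * y + 2 * b₂ * x - 4 * r * x * y + 2 * γ * x ^ 2 * y + (1 - γ) * y =
      y * (2 * γ * x ^ 2 - 4 * r * x + (2 * b₁ + 2 * b₂ * (1 - γ) / γ + 1 - γ)) := by
    linear_combination 2 * b₂ * hx
  rw [factorization, mul_eq_zero_iff_left hy]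

theorem second_einstein_equation_iff_of_hyperbola {R : Type*} [CommRing R]
    {γ b₁ b₂ r x y : R} (hyperbola : 2 * x * y = 1) :
    2 * b₁ * y + 2 * b₂ * x - 4 * r * x * y + 2 * γ * x ^ 2 * y + (1 - γ) * y = 0 ↔
      2 * (2 * b₂ + γ) * x ^ 2 - 4 * r * x + (2 * b₁ + 1 - γ) = 0 := by
  have hy : IsUnit y := .of_mul_eq_one_right (2 * x) hyperbola
  have factorization : 2 * b₁ * y + 2 * b₂ * x - 4 * r * x * y + 2 * γ * x ^ 2 * y + (1 - γ) * y =
      y * (2 * (2 * b₂ + γ) * x ^ 2 - 4 * r * x + (2 * b₁ + 1 - γ)) := by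
    linear_combination -2 * b₂ * x * hyperbola
  rw [factorization, hy.mul_right_eq_zero]

theorem einsteinSystem_one_sub_iff {γ b₁ b₂ r x y : ℝ} (hγ : γ ≠ 0) (hy : y ≠ 0) :
    EinsteinSystem γ (1 - γ) b₁ b₂ r x y ↔
      ((1 - γ) * y = γ * x ∧
        2 * γ * x ^ 2 - 4 * r * x + (2 * b₁ + 2 * b₂ * (1 - γ) / γ + 1 - γ) = 0) ∨
      (2 * x * y = 1 ∧ 2 * (2 * b₂ + γ) * x ^ 2 - 4 * r * x + (2 * b₁ + 1 - γ) = 0) := by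
  rw [EinsteinSystem, first_einstein_equation_iff, or_and_right]
  exact or_congr
    (and_congr_right (second_einstein_equation_iff_of_line hγ hy))
    (and_congr_right second_einstein_equation_iff_of_hyperbola)

theorem sq_eq_iff_eq_sqrt_or_eq_neg_sqrt {x d : ℝ} :
    x ^ 2 = d ↔ 0 ≤ d ∧ (x = √d ∨ x = -√d) := by
  constructor
  · rintro rfl
    exact ⟨sq_nonneg x, sq_eq_sq_iff_eq_or_eq_neg.1 (Real.sq_sqrt (sq_nonneg x)).symm⟩
  · rintro ⟨hd, hx⟩
    exact (sq_eq_sq_iff_eq_or_eq_neg.2 hx).trans (Real.sq_sqrt hd)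

theorem quadratic_eq_zero_iff_sqrt {a p c x : ℝ} (ha : a ≠ 0) :
    a * x ^ 2 - 2 * p * x + c = 0 ↔
      0 ≤ p ^ 2 - a * c ∧ (x = (p + √(p ^ 2 - a * c)) / a ∨ x = (p - √(p ^ 2 - a * c)) / a) := by
  have completed_square : a * x ^ 2 - 2 * p * x + c = 0 ↔ (a * x - p) ^ 2 = p ^ 2 - a * c := by
    have identity : a * (a * x ^ 2 - 2 * p * x + c) = (a * x - p) ^ 2 - (p ^ 2 - a * c) := by ring
    rw [← mul_eq_zero_iff_left ha, identity, sub_eq_zero]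
  rw [completed_square, sq_eq_iff_eq_sqrt_or_eq_neg_sqrt, eq_div_iff ha, eq_div_iff ha,
    sub_eq_iff_eq_add', sub_eq_iff_eq_add', ← sub_eq_add_neg, mul_comm a x]

theorem einsteinSystem_one_sub_and_hyperbola_iff {γ b₁ b₂ r x y D : ℝ} (ha : 2 * b₂ + γ ≠ 0)
    (hy : y ≠ 0) (hD : D = 4 * r ^ 2 - 2 * (2 * b₂ + γ) * (2 * b₁ + 1 - γ)) :
    EinsteinSystem γ (1 - γ) b₁ b₂ r x y ∧ 2 * x * y = 1 ↔
      0 ≤ D ∧ (x = (2 * r + √D) / (2 * (2 * b₂ + γ)) ∨ x = (2 * r - √D) / (2 * (2 * b₂ + γ))) ∧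
        y = 1 / (2 * x) := by
  have system_iff (hyperbola : 2 * x * y = 1) : EinsteinSystem γ (1 - γ) b₁ b₂ r x y ↔
      2 * (2 * b₂ + γ) * x ^ 2 - 2 * (2 * r) * x + (2 * b₁ + 1 - γ) = 0 := by
    rw [EinsteinSystem, first_einstein_equation_iff,
      second_einstein_equation_iff_of_hyperbola hyperbola, and_iff_right (.inr hyperbola),
      show 2 * (2 * r) = 4 * r by ring]
  have hyperbola_iff : 2 * x * y = 1 ↔ y = 1 / (2 * x) := by
    rw [mul_eq_one_iff_eq_inv₀ hy, eq_comm, inv_eq_iff_eq_inv, one_div]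
  have discriminant : (2 * r) ^ 2 - 2 * (2 * b₂ + γ) * (2 * b₁ + 1 - γ) = D := by rw [hD]; ring
  rw [and_congr_left system_iff, quadratic_eq_zero_iff_sqrt (mul_ne_zero two_ne_zero ha),
    discriminant, hyperbola_iff, and_assoc]

theorem einstein_system_complementary_gamma_case_general
    {γ₁ b₁ b₂ r D : ℝ} (hγ : γ₁ ≠ 0) (ha : 2 * b₂ + γ₁ ≠ 0)
    (hD : D = 4 * r ^ 2 - 2 * (2 * b₂ + γ₁) * (2 * b₁ + 1 - γ₁)) :
    (∀ X₁ X₂ : ℝ,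
      2 * γ₁ * X₁ ^ 2 * X₂ + (1 - γ₁) * X₂ - 2 * (1 - γ₁) * X₁ * X₂ ^ 2 - (1 - (1 - γ₁)) * X₁ = 0 ↔
        (1 - γ₁) * X₂ = γ₁ * X₁ ∨ 2 * X₁ * X₂ = 1) ∧
    (∀ X₁ X₂ : ℝ, X₂ ≠ 0 →
      (EinsteinSystem γ₁ (1 - γ₁) b₁ b₂ r X₁ X₂ ↔
        ((1 - γ₁) * X₂ = γ₁ * X₁ ∧
            2 * γ₁ * X₁ ^ 2 - 4 * r * X₁ + (2 * b₁ + 2 * b₂ * (1 - γ₁) / γ₁ + 1 - γ₁) = 0) ∨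
        (2 * X₁ * X₂ = 1 ∧ 2 * (2 * b₂ + γ₁) * X₁ ^ 2 - 4 * r * X₁ + (2 * b₁ + 1 - γ₁) = 0))) ∧
    (∀ X₁ X₂ : ℝ, X₂ ≠ 0 →
      (EinsteinSystem γ₁ (1 - γ₁) b₁ b₂ r X₁ X₂ ∧ 2 * X₁ * X₂ = 1 ↔
        0 ≤ D ∧
        (X₁ = (2 * r + √D) / (2 * (2 * b₂ + γ₁)) ∨ X₁ = (2 * r - √D) / (2 * (2 * b₂ + γ₁))) ∧
        X₂ = 1 / (2 * X₁))) :=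
  ⟨first_einstein_equation_iff γ₁,
    fun _ _ hX₂ => einsteinSystem_one_sub_iff hγ hX₂,
    fun _ _ hX₂ => einsteinSystem_one_sub_and_hyperbola_iff ha hX₂ hD⟩

/- STATEMENT 11: case γ₂ = 1 − γ₁. A positive pair satisfies (E1) iff
(1−γ₁)X₂ = γ₁X₁ or 2X₁X₂ = 1; it satisfies the full system iff
(a) (1−γ₁)X₂ = γ₁X₁ and 2γ₁X₁² − 4rX₁ + (2b₁ + 2b₂(1−γ₁)/γ₁ + 1 − γ₁) = 0, or
(b) 2X₁X₂ = 1 and 2(2b₂+γ₁)X₁² − 4rX₁ + (2b₁+1−γ₁) = 0;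
in case (b), with D = 4r² − 2(2b₂+γ₁)(2b₁+1−γ₁), a solution forces D ≥ 0,
X₁ = (2r ± √D)/(2(2b₂+γ₁)) and X₂ = 1/(2X₁). -/
theorem einstein_system_complementary_gamma_case
    (γ₁ b₁ b₂ r : ℝ) (hγ0 : 0 < γ₁) (hγ1 : γ₁ < 1)
    (hb₁ : 0 ≤ b₁) (hb₂ : 0 ≤ b₂) (hr : 0 < r)
    (D : ℝ) (hD : D = 4*r^2 - 2*(2*b₂+γ₁)*(2*b₁+1-γ₁)) :
    (∀ X₁ X₂ : ℝ, 0 < X₁ → 0 < X₂ →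
      (2*γ₁*X₁^2*X₂ + (1-γ₁)*X₂ - 2*(1-γ₁)*X₁*X₂^2 - (1-(1-γ₁))*X₁ = 0 ↔
        ((1-γ₁)*X₂ = γ₁*X₁ ∨ 2*X₁*X₂ = 1))) ∧
    (∀ X₁ X₂ : ℝ, 0 < X₁ → 0 < X₂ →
      (EinsteinSystem γ₁ (1-γ₁) b₁ b₂ r X₁ X₂ ↔
        (((1-γ₁)*X₂ = γ₁*X₁ ∧
            2*γ₁*X₁^2 - 4*r*X₁ + (2*b₁ + 2*b₂*(1-γ₁)/γ₁ + 1 - γ₁) = 0) ∨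
         (2*X₁*X₂ = 1 ∧ 2*(2*b₂+γ₁)*X₁^2 - 4*r*X₁ + (2*b₁+1-γ₁) = 0)))) ∧
    (∀ X₁ X₂ : ℝ, 0 < X₁ → 0 < X₂ →
      EinsteinSystem γ₁ (1-γ₁) b₁ b₂ r X₁ X₂ → 2*X₁*X₂ = 1 →
      0 ≤ D ∧
      (X₁ = (2*r + Real.sqrt D)/(2*(2*b₂+γ₁)) ∨
       X₁ = (2*r - Real.sqrt D)/(2*(2*b₂+γ₁))) ∧
      X₂ = 1/(2*X₁)) := by
  obtain ⟨first, system, hyperbola⟩ :=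
    einstein_system_complementary_gamma_case_general hγ0.ne' (by positivity) hD
  exact ⟨fun X₁ X₂ _ _ => first X₁ X₂, fun X₁ X₂ _ hX₂ => system X₁ X₂ hX₂.ne',
    fun X₁ X₂ _ hX₂ hE h => (hyperbola X₁ X₂ hX₂.ne').1 ⟨hE, h⟩⟩
end
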